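/- Let K be a field with algebraic closure K̄, let > be a semigroup order on the monomials in x₁,…,xₙ, let S ⊆ A := K[x₁,…,xₙ] and S̄ ⊆ Ā := K̄[x₁,…,xₙ] be the multiplicative sets {1+g : g = 0 or lt(g) < 1} of the respective rings, and for an ideal I ⊆ A let Ī denote the ideal of Ā generated by the image of I under the inclusion A → Ā. Then the preimage in A (under the inclusion A → Ā) of the contraction (S̄⁻¹Ī)^c equals (S⁻¹I)^c. -/

import Mathlib

open scoped Classical

noncomputable section

/-- A semigroup order on monomials: a strict total order on exponent vectors (written
additively; the monomial `1` corresponds to `0`) compatible with multiplication. -/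
def IsSemigroupOrder {σ : Type*} (lt : (σ →₀ ℕ) → (σ →₀ ℕ) → Prop) : Prop :=
  IsStrictTotalOrder (σ →₀ ℕ) lt ∧ ∀ a b c : σ →₀ ℕ, lt a b → lt (c + a) (c + b)

/-- The variable `i` is local for the order `lt`, i.e. `x_i < 1`. -/
def IsLocalVar {σ : Type*} (lt : (σ →₀ ℕ) → (σ →₀ ℕ) → Prop) (i : σ) : Prop :=
  lt (Finsupp.single i 1) 0

/-- A control order: a semigroup order under which every monomial divisible by a local
variable is `< 1`. -/
def IsControlOrder {σ : Type*} (lt : (σ →₀ ℕ) → (σ →₀ ℕ) → Prop) : Prop :=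
  IsSemigroupOrder lt ∧ ∀ m : σ →₀ ℕ, (∃ i, IsLocalVar lt i ∧ m i ≠ 0) → lt m 0

/-- `m` is the leading monomial of `g` w.r.t. `lt`. -/
def IsLeadingMonomial {K : Type*} [CommSemiring K] {σ : Type*}
    (lt : (σ →₀ ℕ) → (σ →₀ ℕ) → Prop) (g : MvPolynomial σ K) (m : σ →₀ ℕ) : Prop :=
  m ∈ g.support ∧ ∀ m' ∈ g.support, m' ≠ m → lt m' m

/-- The multiplicative set `S = {1 + g : g = 0 or lt(g) < 1}`. -/
def SDen (K : Type*) [CommSemiring K] {σ : Type*}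
    (lt : (σ →₀ ℕ) → (σ →₀ ℕ) → Prop) : Set (MvPolynomial σ K) :=
  {f | ∃ g : MvPolynomial σ K, f = 1 + g ∧
    (g = 0 ∨ ∃ m, IsLeadingMonomial lt g m ∧ lt m 0)}

/-- `I = ⋂ i ∈ s, Q i` is a minimal primary decomposition: every `Q i` is primary, the
radicals are pairwise distinct, and no component contains the intersection of the others. -/
def MinPrimDecOn {R : Type*} [CommRing R] {ι : Type*} (I : Ideal R) (Q : ι → Ideal R)
    (s : Finset ι) : Prop :=
  I = ⨅ i ∈ s, Q i ∧ (∀ i ∈ s, (Q i).IsPrimary) ∧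
    (∀ i ∈ s, ∀ j ∈ s, (Q i).radical = (Q j).radical → i = j) ∧
    ∀ i ∈ s, ¬ (⨅ j ∈ s.erase i, Q j) ≤ Q i

/-- The extraction determined by the decomposition `Q` (over `s`) and the ideal `J`:
the intersection of those components `Q i` with `Q i + J ≠ A` (which is `⊤` = the whole
ring when there are no such components). -/
def extractionFrom {R : Type*} [CommRing R] {ι : Type*} (J : Ideal R) (Q : ι → Ideal R)
    (s : Finset ι) : Ideal R :=
  ⨅ i ∈ s.filter (fun i => Q i ⊔ J ≠ ⊤), Q i

/-- `B` is the extraction `β(I,J)` of `I` by `J`. -/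
def IsExtraction {R : Type*} [CommRing R] (I J B : Ideal R) : Prop :=
  ∃ (k : ℕ) (Q : Fin k → Ideal R), MinPrimDecOn I Q Finset.univ ∧
    B = extractionFrom J Q Finset.univ

/-- `t ⊆ s` determines an isolated set of primes of the decomposition `Q` over `s`. -/
def IsIsolatedOn {R : Type*} [CommRing R] {ι : Type*} (Q : ι → Ideal R)
    (s t : Finset ι) : Prop :=
  t ⊆ s ∧ ∀ j ∈ s, (∃ i ∈ t, (Q j).radical ≤ (Q i).radical) → j ∈ t

/-- The lifted ideal `W' = ⟨W, t₁ - g₁, …, t_s - g_s⟩ ⊆ A' = K[x₁,…,xₙ,t₁,…,t_s]`. -/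
def liftIdeal {K : Type*} [CommRing K] {n s : ℕ} (g : Fin s → MvPolynomial (Fin n) K)
    (W : Ideal (MvPolynomial (Fin n) K)) : Ideal (MvPolynomial (Fin n ⊕ Fin s) K) :=
  W.map (MvPolynomial.rename (Sum.inl : Fin n → Fin n ⊕ Fin s)).toRingHom ⊔
    Ideal.span (Set.range fun w : Fin s =>
      (MvPolynomial.X (Sum.inr w) : MvPolynomial (Fin n ⊕ Fin s) K) -
        MvPolynomial.rename (Sum.inl : Fin n → Fin n ⊕ Fin s) (g w))

/-- The substitution homomorphism `φ : A' → A`, fixing each `x_i` and sending `t_w ↦ g_w`. -/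
def substHom {K : Type*} [CommRing K] {n s : ℕ} (g : Fin s → MvPolynomial (Fin n) K) :
    MvPolynomial (Fin n ⊕ Fin s) K →ₐ[K] MvPolynomial (Fin n) K :=
  MvPolynomial.aeval (Sum.elim MvPolynomial.X g)

/-!
A `K`-linear retraction `φ : K̄ → K` of the inclusion, applied to coefficients, is an `A`-linear
retraction `Φ : Ā → A`. Being `A`-linear, `Φ` sends `Ī` into `I`; fixing `1` and not enlarging
supports, it sends `S̄` into `S`. So if `s̄ ∈ S̄` satisfies `s̄ f ∈ Ī` with `f ∈ A`, then
`Φ(s̄) f = Φ(s̄ f) ∈ I` with `Φ(s̄) ∈ S`. The other inclusion only needs that `S̄` contains `S`.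
-/

section LocalizationContraction

variable {A B : Type*} [CommSemiring A] [CommSemiring B] [Algebra A B]

theorem linearMap_mem_of_mem_ideal_map (π : B →ₗ[A] A) {I : Ideal A} {b : B}
    (hb : b ∈ I.map (algebraMap A B)) : π b ∈ I := by
  have hb' : b ∈ I • (⊤ : Submodule A B) := by
    rwa [Ideal.smul_top_eq_map, Submodule.restrictScalars_mem]
  have hπ : (I • (⊤ : Submodule A B)).map π ≤ I :=
    (Submodule.map_smul'' I ⊤ π).trans_le Ideal.mul_le_left
  exact hπ (Submodule.mem_map_of_mem hb')

theorem comap_localization_contraction_eq_of_linearMap (π : B →ₗ[A] A)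
    {S : Submonoid A} {T : Submonoid B} (hST : ∀ s ∈ S, algebraMap A B s ∈ T)
    (hTS : ∀ t ∈ T, π t ∈ S) (A' B' : Type*) [CommSemiring A'] [CommSemiring B']
    [Algebra A A'] [Algebra B B'] [IsLocalization S A'] [IsLocalization T B'] (I : Ideal A) :
    (((I.map (algebraMap A B)).map (algebraMap B B')).comap (algebraMap B B')).comap
        (algebraMap A B) =
      (I.map (algebraMap A A')).comap (algebraMap A A') := by
  ext f
  simp only [Ideal.mem_comap, IsLocalization.algebraMap_mem_map_algebraMap_iff S,
    IsLocalization.algebraMap_mem_map_algebraMap_iff T]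
  constructor
  · rintro ⟨t, ht, htf⟩
    have hπ : π (t * algebraMap A B f) = π t * f := by
      rw [mul_comm, ← Algebra.smul_def, map_smul, smul_eq_mul, mul_comm]
    exact ⟨π t, hTS t ht, hπ ▸ linearMap_mem_of_mem_ideal_map π htf⟩
  · rintro ⟨s, hs, hsf⟩
    exact ⟨algebraMap A B s, hST s hs, map_mul (algebraMap A B) s f ▸ Ideal.mem_map_of_mem _ hsf⟩

end LocalizationContraction

section Denominators

theorem exists_mem_forall_ne_rel {α : Type*} (r : α → α → Prop) [IsStrictTotalOrder α r]
    {s : Finset α} (hs : s.Nonempty) : ∃ a ∈ s, ∀ b ∈ s, b ≠ a → r b a := by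
  let := linearOrderOfSTO r
  exact ⟨s.max' hs, s.max'_mem hs, fun b hb hne ↦ (s.le_max' b hb).lt_of_ne hne⟩

variable {σ : Type*} {lt : (σ →₀ ℕ) → (σ →₀ ℕ) → Prop} [IsStrictTotalOrder (σ →₀ ℕ) lt]

theorem exists_isLeadingMonomial {K : Type*} [CommSemiring K] {g : MvPolynomial σ K}
    (hg : g ≠ 0) : ∃ m, IsLeadingMonomial lt g m :=
  exists_mem_forall_ne_rel lt (MvPolynomial.support_nonempty.2 hg)

theorem mem_SDen_iff {K : Type*} [CommRing K] {f : MvPolynomial σ K} :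
    f ∈ SDen K lt ↔ ∀ m ∈ (f - 1).support, lt m 0 := by
  constructor
  · rintro ⟨g, rfl, rfl | ⟨m₀, ⟨-, hmax⟩, hm₀⟩⟩ m hm
    · simp at hm
    · rw [add_sub_cancel_left] at hm
      by_cases h : m = m₀
      · exact h ▸ hm₀
      · exact trans_of lt (hmax m hm h) hm₀
  · intro hf
    refine ⟨f - 1, (add_sub_cancel 1 f).symm, or_iff_not_imp_left.2 fun hne ↦ ?_⟩
    obtain ⟨m, hm⟩ := exists_isLeadingMonomial (lt := lt) hne
    exact ⟨m, hm, hf m hm.1⟩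

theorem mem_SDen_of_coeff_eq_map {K L : Type*} [CommRing K] [CommRing L] {ψ : K →+ L}
    (hψ : ψ 1 = 1) {p : MvPolynomial σ K} {q : MvPolynomial σ L}
    (hq : ∀ m, q.coeff m = ψ (p.coeff m)) (hp : p ∈ SDen K lt) : q ∈ SDen L lt := by
  rw [mem_SDen_iff] at hp ⊢
  have hcoeff (m : σ →₀ ℕ) : (q - 1).coeff m = ψ ((p - 1).coeff m) := by
    simp only [MvPolynomial.coeff_sub, MvPolynomial.coeff_one, hq, map_sub, apply_ite ψ, hψ,
      map_zero]
  refine fun m hm ↦ hp m ?_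
  rw [MvPolynomial.mem_support_iff, hcoeff] at hm
  exact MvPolynomial.mem_support_iff.2 fun h ↦ hm (by rw [h, map_zero])

end Denominators

section BaseChange

attribute [local instance] MvPolynomial.algebraMvPolynomial

variable {σ : Type*}

section CoeffwiseLinearMap

variable {K L : Type*} [CommSemiring K] [CommSemiring L] [Algebra K L]

/-- The `K[x]`-linear map `L[x] → K[x]` applying a `K`-linear map `φ : L → K` to each coefficient.
It retracts the inclusion `K[x] → L[x]` when `φ 1 = 1`, and so descends ideal membership. -/
def coeffwiseLinearMap (φ : L →ₗ[K] K) :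
    MvPolynomial σ L →ₗ[MvPolynomial σ K] MvPolynomial σ K where
  toFun := AddMonoidAlgebra.map φ.toAddMonoidHom
  map_add' p q := by
    ext m
    simp
  map_smul' a p := by
    ext m
    simp only [Algebra.smul_def, MvPolynomial.algebraMap_def, MvPolynomial.coeff_mul,
      MvPolynomial.coeff_addMonoidAlgebraMap, MvPolynomial.coeff_map, map_sum, RingHom.id_apply]
    refine Finset.sum_congr rfl fun x _ ↦ ?_
    rw [← Algebra.smul_def]
    exact map_smul φ _ _

theorem coeff_coeffwiseLinearMap (φ : L →ₗ[K] K) (p : MvPolynomial σ L) (m : σ →₀ ℕ) :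
    (coeffwiseLinearMap φ p).coeff m = φ (p.coeff m) :=
  MvPolynomial.coeff_addMonoidAlgebraMap φ.toAddMonoidHom p m

end CoeffwiseLinearMap

theorem stmt_9_general {K L : Type*} [CommRing K] [CommRing L] [Algebra K L]
    (φ : L →ₗ[K] K) (hφ : φ 1 = 1) (lt : (σ →₀ ℕ) → (σ →₀ ℕ) → Prop)
    [IsStrictTotalOrder (σ →₀ ℕ) lt]
    (S : Submonoid (MvPolynomial σ K)) (hS : (S : Set (MvPolynomial σ K)) = SDen K lt)
    (T : Submonoid (MvPolynomial σ L)) (hT : (T : Set (MvPolynomial σ L)) = SDen L lt)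
    (I : Ideal (MvPolynomial σ K)) :
    (((I.map (MvPolynomial.map (algebraMap K L))).map
          (algebraMap (MvPolynomial σ L) (Localization T))).comap
        (algebraMap (MvPolynomial σ L) (Localization T))).comap
        (MvPolynomial.map (algebraMap K L)) =
      (I.map (algebraMap (MvPolynomial σ K) (Localization S))).comap
        (algebraMap (MvPolynomial σ K) (Localization S)) := by
  have hST : ∀ s ∈ S, MvPolynomial.map (algebraMap K L) s ∈ T := fun s hs ↦ by
    rw [← SetLike.mem_coe, hS] at hs
    rw [← SetLike.mem_coe, hT]
    exact mem_SDen_of_coeff_eq_map (ψ := (algebraMap K L).toAddMonoidHom) (map_one (algebraMap K L))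
      (MvPolynomial.coeff_map _ s) hs
  have hTS : ∀ t ∈ T, coeffwiseLinearMap φ t ∈ S := fun t ht ↦ by
    rw [← SetLike.mem_coe, hT] at ht
    rw [← SetLike.mem_coe, hS]
    exact mem_SDen_of_coeff_eq_map (ψ := φ.toAddMonoidHom) hφ (coeff_coeffwiseLinearMap φ t) ht
  exact comap_localization_contraction_eq_of_linearMap (coeffwiseLinearMap φ) hST hTS
    (Localization S) (Localization T) I

end BaseChange

/-- for a semigroup order `lt` and an ideal `I ⊆ A = K[x]`, the preimage in
`A` of the contraction `(S̄⁻¹Ī)^c ⊆ Ā = K̄[x]` equals the contraction `(S⁻¹I)^c`. -/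
theorem stmt_9 {K : Type*} [Field K] {n : ℕ}
    (lt : (Fin n →₀ ℕ) → (Fin n →₀ ℕ) → Prop) (hsem : IsSemigroupOrder lt)
    (S : Submonoid (MvPolynomial (Fin n) K))
    (hS : (S : Set (MvPolynomial (Fin n) K)) = SDen K lt)
    (Sb : Submonoid (MvPolynomial (Fin n) (AlgebraicClosure K)))
    (hSb : (Sb : Set (MvPolynomial (Fin n) (AlgebraicClosure K))) =
      SDen (AlgebraicClosure K) lt)
    (I : Ideal (MvPolynomial (Fin n) K)) :
    Ideal.comap (MvPolynomial.map (algebraMap K (AlgebraicClosure K)))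
        (((I.map (MvPolynomial.map (algebraMap K (AlgebraicClosure K)))).map
            (algebraMap (MvPolynomial (Fin n) (AlgebraicClosure K)) (Localization Sb))).comap
          (algebraMap (MvPolynomial (Fin n) (AlgebraicClosure K)) (Localization Sb))) =
      (I.map (algebraMap (MvPolynomial (Fin n) K) (Localization S))).comap
        (algebraMap (MvPolynomial (Fin n) K) (Localization S)) := by
  have := hsem.1
  obtain ⟨φ, hφ⟩ := Module.Projective.exists_dual_eq_one K (one_ne_zero (α := AlgebraicClosure K))
  exact stmt_9_general φ hφ lt S hS Sb hSb I
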